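/- Let (X,d) be a compact geodesic metric space and f: X → ℝ a Lipschitz function. Then for every (x,t) ∈ X × (0,∞) one has |D Q_t f|(x) = D⁺(x,t)/t, and consequently for every x ∈ X the Hamilton–Jacobi equation (d/dt) Q_t f(x) + (1/2) |D Q_t f|²(x) = 0 holds for every t ∈ (0,∞) with at most countably many exceptions. -/

import Mathlib

open Filter Topology Set MeasureTheory
open scoped ENNReal NNReal

/-- Hopf-Lax semigroup: `Q_t f (x) = inf_y ( f y + d(x,y)^2 / (2t) )`, with `Q_0 f = f`. -/
noncomputable def HL {X : Type*} [MetricSpace X] (f : X → ℝ) (t : ℝ) (x : X) : ℝ :=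
  if t = 0 then f x else ⨅ y : X, (f y + dist x y ^ 2 / (2 * t))

/-- The set of minimizers of `y ↦ f y + d(x,y)^2/(2t)`. -/
def minSet {X : Type*} [MetricSpace X] (f : X → ℝ) (t : ℝ) (x : X) : Set X :=
  {y | ∀ z : X, f y + dist x y ^ 2 / (2 * t) ≤ f z + dist x z ^ 2 / (2 * t)}

/-- `D⁺(x,t)`: the largest distance from `x` to a minimizer of `y ↦ f y + d(x,y)^2/(2t)`,
with `D⁺(x,0) = 0`. -/
noncomputable def Dplus {X : Type*} [MetricSpace X] (f : X → ℝ) (x : X) (t : ℝ) : ℝ :=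
  if t = 0 then 0 else sSup (dist x '' minSet f t x)

/-- `D⁻(x,t)`: the smallest distance from `x` to a minimizer of `y ↦ f y + d(x,y)^2/(2t)`,
with `D⁻(x,0) = 0`. -/
noncomputable def Dminus {X : Type*} [MetricSpace X] (f : X → ℝ) (x : X) (t : ℝ) : ℝ :=
  if t = 0 then 0 else sInf (dist x '' minSet f t x)

/-- The slope (local Lipschitz constant) of `u` at `x`:
`|Du|(x) = limsup_{y→x} |u y - u x| / d(y,x)` (this `Real`-valued `limsup` is `0` at isolated
points, where the punctured neighborhood filter is trivial). -/
noncomputable def locSlope {X : Type*} [MetricSpace X] (u : X → ℝ) (x : X) : ℝ :=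
  limsup (fun y => |u y - u x| / dist y x) (𝓝[≠] x)

/-- A metric space is geodesic if any two points are joined by a constant speed geodesic
parametrized on `[0,1]`. -/
def IsGeodesicSpace (X : Type*) [MetricSpace X] : Prop :=
  ∀ x y : X, ∃ γ : ℝ → X, γ 0 = x ∧ γ 1 = y ∧
    ∀ s ∈ Icc (0 : ℝ) 1, ∀ t ∈ Icc (0 : ℝ) 1, dist (γ s) (γ t) = |s - t| * dist x y

section HopfLax

variable {X : Type*} [MetricSpace X]

lemma HL_eq_of_mem_minSet {f : X → ℝ} {t : ℝ} (ht : t ≠ 0) {x y : X} (hy : y ∈ minSet f t x) :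
    HL f t x = f y + dist x y ^ 2 / (2 * t) := by
  have : Nonempty X := ⟨x⟩
  rw [HL, if_neg ht]
  refine le_antisymm (ciInf_le ⟨f y + dist x y ^ 2 / (2 * t), ?_⟩ y) (le_ciInf hy)
  rintro _ ⟨z, rfl⟩
  exact hy z

lemma minSet_nonempty [CompactSpace X] {f : X → ℝ} (hf : Continuous f) (t : ℝ) (x : X) :
    (minSet f t x).Nonempty := by
  have : Nonempty X := ⟨x⟩
  have hc : Continuous fun y => f y + dist x y ^ 2 / (2 * t) := by fun_prop
  obtain ⟨y, -, hy⟩ := isCompact_univ.exists_isMinOn univ_nonempty hc.continuousOn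
  exact ⟨y, fun z => hy (mem_univ z)⟩

lemma HL_le [CompactSpace X] {f : X → ℝ} (hf : Continuous f) {t : ℝ} (ht : t ≠ 0) (x z : X) :
    HL f t x ≤ f z + dist x z ^ 2 / (2 * t) := by
  obtain ⟨y, hy⟩ := minSet_nonempty hf t x
  exact (HL_eq_of_mem_minSet ht hy).trans_le (hy z)

/-- The graph of the minimizer correspondence is closed. -/
lemma isClosed_minSet_graph {f : X → ℝ} (hf : Continuous f) (t : ℝ) :
    IsClosed {p : X × X | p.2 ∈ minSet f t p.1} := by
  have h : {p : X × X | p.2 ∈ minSet f t p.1} = ⋂ z : X, {p : X × X |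
      f p.2 + dist p.1 p.2 ^ 2 / (2 * t) ≤ f z + dist p.1 z ^ 2 / (2 * t)} := by
    ext p
    simp [minSet]
  rw [h]
  exact isClosed_iInter fun z => isClosed_le (by fun_prop) (by fun_prop)

lemma isClosed_minSet {f : X → ℝ} (hf : Continuous f) (t : ℝ) (x : X) :
    IsClosed (minSet f t x) :=
  (isClosed_minSet_graph hf t).preimage (f := fun y => (x, y)) (by fun_prop)

lemma isCompact_dist_image_minSet [CompactSpace X] {f : X → ℝ} (hf : Continuous f) (t : ℝ)
    (x : X) : IsCompact (dist x '' minSet f t x) :=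
  (isClosed_minSet hf t x).isCompact.image (by fun_prop)

lemma dist_le_Dplus [CompactSpace X] {f : X → ℝ} (hf : Continuous f) {t : ℝ} (ht : t ≠ 0)
    {x y : X} (hy : y ∈ minSet f t x) : dist x y ≤ Dplus f x t := by
  rw [Dplus, if_neg ht]
  exact le_csSup (isCompact_dist_image_minSet hf t x).bddAbove ⟨y, hy, rfl⟩

lemma exists_dist_eq_Dplus [CompactSpace X] {f : X → ℝ} (hf : Continuous f) {t : ℝ} (ht : t ≠ 0)
    (x : X) : ∃ y ∈ minSet f t x, dist x y = Dplus f x t := by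
  rw [Dplus, if_neg ht]
  exact (isCompact_dist_image_minSet hf t x).sSup_mem ((minSet_nonempty hf t x).image _)

lemma Dplus_nonneg [CompactSpace X] {f : X → ℝ} (hf : Continuous f) {t : ℝ} (ht : t ≠ 0)
    (x : X) : 0 ≤ Dplus f x t := by
  obtain ⟨y, -, hy⟩ := exists_dist_eq_Dplus hf ht x
  exact hy ▸ dist_nonneg

/-- `D⁺(·,t)` is upper semicontinuous. -/
lemma eventually_Dplus_lt [CompactSpace X] {f : X → ℝ} (hf : Continuous f) {t : ℝ} (ht : t ≠ 0)
    {x : X} {c : ℝ} (hc : Dplus f x t < c) : ∀ᶠ y in 𝓝 x, Dplus f y t < c := by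
  have hcl : IsClosed ({p : X × X | p.2 ∈ minSet f t p.1} ∩ {p | c ≤ dist p.1 p.2}) :=
    (isClosed_minSet_graph hf t).inter (isClosed_le (by fun_prop) (by fun_prop))
  have hcl' := (hcl.isCompact.image continuous_fst).isClosed
  have hx : x ∉ Prod.fst '' ({p : X × X | p.2 ∈ minSet f t p.1} ∩ {p | c ≤ dist p.1 p.2}) := by
    rintro ⟨⟨_, z⟩, ⟨hz, hd⟩, rfl⟩
    exact (hd.trans (dist_le_Dplus hf ht hz)).not_gt hc
  filter_upwards [hcl'.isOpen_compl.mem_nhds hx] with y hy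
  by_contra! h
  obtain ⟨z, hz, hd⟩ := exists_dist_eq_Dplus hf ht y
  exact hy ⟨(y, z), ⟨hz, h.trans hd.ge⟩, rfl⟩

lemma HL_sub_le [CompactSpace X] {f : X → ℝ} (hf : Continuous f) {t : ℝ} (ht : 0 < t) (x y : X) :
    HL f t x - HL f t y ≤ (Dplus f y t + dist y x) / t * dist y x := by
  obtain ⟨z, hz, hd⟩ := exists_dist_eq_Dplus hf ht.ne' y
  have h1 := HL_le hf ht.ne' x z
  rw [HL_eq_of_mem_minSet ht.ne' hz, ← hd]
  have h2 : dist x z ≤ dist y x + dist y z := dist_comm x y ▸ dist_triangle x y z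
  have h3 : dist x z ^ 2 ≤ (dist y x + dist y z) ^ 2 := by gcongr
  calc _ ≤ (dist x z ^ 2 - dist y z ^ 2) / (2 * t) := by
        rw [sub_div]; linarith
    _ ≤ (2 * ((dist y z + dist y x) * dist y x)) / (2 * t) := by
        gcongr; nlinarith [sq_nonneg (dist y x)]
    _ = _ := by field_simp

lemma eventually_slope_HL_le [CompactSpace X] {f : X → ℝ} (hf : Continuous f) {t : ℝ}
    (ht : 0 < t) (x : X) {ε : ℝ} (hε : 0 < ε) :
    ∀ᶠ y in 𝓝[≠] x, |HL f t y - HL f t x| / dist y x ≤ Dplus f x t / t + ε := by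
  have hb : Dplus f x t < Dplus f x t + ε * t / 2 := by
    have := mul_pos hε ht; linarith
  have hball := Metric.ball_mem_nhds x (show 0 < ε * t / 2 by positivity)
  filter_upwards [nhdsWithin_le_nhds (eventually_Dplus_lt hf ht.ne' hb),
    nhdsWithin_le_nhds hball, self_mem_nhdsWithin] with y h1 h2 h3
  rw [Metric.mem_ball] at h2
  rw [div_le_iff₀ (dist_pos.2 h3)]
  have e : Dplus f x t / t + ε = (Dplus f x t + ε * t / 2 + ε * t / 2) / t := by field_simp; ring
  rw [e]
  refine abs_sub_le_iff.2 ⟨?_, ?_⟩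
  · have h := HL_sub_le hf ht y x
    rw [dist_comm x y] at h
    refine h.trans ?_
    gcongr
  · refine (HL_sub_le hf ht x y).trans ?_
    gcongr

lemma frequently_le_slope_HL [CompactSpace X] (hgeo : IsGeodesicSpace X) {f : X → ℝ}
    (hf : Continuous f) {t : ℝ} (ht : 0 < t) {x : X} (hD : 0 < Dplus f x t) {ε : ℝ} (hε : 0 < ε) :
    ∃ᶠ y in 𝓝[≠] x, Dplus f x t / t - ε ≤ |HL f t y - HL f t x| / dist y x := by
  obtain ⟨z, hz, hd⟩ := exists_dist_eq_Dplus hf ht.ne' x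
  obtain ⟨γ, h0, h1, hγ⟩ := hgeo x z
  set D := Dplus f x t
  have hsmall : ∀ᶠ s in 𝓝[>] (0 : ℝ), s ∈ Ioo 0 1 ∧ D / t - ε ≤ D * (1 - s / 2) / t := by
    refine Eventually.and (Ioo_mem_nhdsGT one_pos) (nhdsWithin_le_nhds ?_)
    have hc : Continuous fun s : ℝ => D * (1 - s / 2) / t := by fun_prop
    refine (hc.tendsto 0).eventually (Ici_mem_nhds ?_)
    simpa using hε
  have hdx : ∀ s ∈ Ioo (0 : ℝ) 1, dist (γ s) x = s * D := fun s hs => by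
    have := hγ s ⟨hs.1.le, hs.2.le⟩ 0 (by simp)
    rwa [h0, sub_zero, abs_of_pos hs.1, hd] at this
  have hdz : ∀ s ∈ Ioo (0 : ℝ) 1, dist (γ s) z = (1 - s) * D := fun s hs => by
    have := hγ s ⟨hs.1.le, hs.2.le⟩ 1 (by simp)
    rwa [h1, abs_sub_comm, abs_of_pos (sub_pos.2 hs.2), hd] at this
  have htend : Tendsto γ (𝓝[>] 0) (𝓝[≠] x) := by
    refine tendsto_nhdsWithin_iff.2 ⟨tendsto_iff_dist_tendsto_zero.2 ?_, ?_⟩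
    · have hc : Tendsto (fun s : ℝ => s * D) (𝓝[>] 0) (𝓝 0) := by
        have : Continuous fun s : ℝ => s * D := by fun_prop
        simpa using (this.tendsto 0).mono_left nhdsWithin_le_nhds
      refine hc.congr' ?_
      filter_upwards [hsmall] with s hs using (hdx s hs.1).symm
    · filter_upwards [hsmall] with s hs
      exact dist_pos.1 (hdx s hs.1 ▸ mul_pos hs.1.1 hD)
  refine htend.frequently (Eventually.frequently ?_)
  filter_upwards [hsmall] with s ⟨hs, hle⟩
  refine hle.trans ?_
  rw [hdx s hs, le_div_iff₀ (mul_pos hs.1 hD)]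
  have hQ := HL_le hf ht.ne' (γ s) z
  rw [hdz s hs] at hQ
  have hx := HL_eq_of_mem_minSet ht.ne' hz
  rw [hd] at hx
  have e : D * (1 - s / 2) / t * (s * D) = D ^ 2 / (2 * t) - ((1 - s) * D) ^ 2 / (2 * t) := by
    field_simp; ring
  rw [e]
  exact le_trans (by linarith) (neg_le_abs _)

theorem locSlope_HL [CompactSpace X] (hgeo : IsGeodesicSpace X) {f : X → ℝ}
    (hf : Continuous f) {t : ℝ} (ht : 0 < t) (x : X) :
    locSlope (HL f t) x = Dplus f x t / t := by
  have hD := Dplus_nonneg hf ht.ne' x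
  rcases (𝓝[≠] x).eq_or_neBot with hbot | hne
  · have h0 : Dplus f x t = 0 := by
      refine (hD.eq_or_lt.resolve_right fun h => ?_).symm
      simpa [hbot] using frequently_le_slope_HL hgeo hf ht h one_pos
    simp [locSlope, hbot, h0, limsup, limsSup]
  have hnn : ∀ y, 0 ≤ |HL f t y - HL f t x| / dist y x := fun y => by positivity
  refine le_antisymm (le_of_forall_pos_le_add fun ε hε => ?_)
    (le_of_forall_sub_le fun ε hε => ?_)
  · exact limsup_le_of_le (isCoboundedUnder_le_of_le _ hnn) (eventually_slope_HL_le hf ht x hε)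
  · refine le_limsup_of_frequently_le ?_ ⟨_, eventually_slope_HL_le hf ht x one_pos⟩
    rcases hD.eq_or_lt with h | h
    · refine (Eventually.of_forall fun y => le_trans ?_ (hnn y)).frequently
      simp [← h, hε.le]
    · exact frequently_le_slope_HL hgeo hf ht h hε

lemma HL_sub_HL_le [CompactSpace X] {f : X → ℝ} (hf : Continuous f) (x : X) {s t : ℝ}
    (hs : s ≠ 0) (ht : t ≠ 0) :
    HL f s x - HL f t x ≤ Dplus f x t ^ 2 / 2 * (s⁻¹ - t⁻¹) := by
  obtain ⟨y, hy, hd⟩ := exists_dist_eq_Dplus hf ht x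
  have h := HL_le hf hs x y
  rw [HL_eq_of_mem_minSet ht hy, ← hd]
  have e : dist x y ^ 2 / 2 * (s⁻¹ - t⁻¹) = dist x y ^ 2 / (2 * s) - dist x y ^ 2 / (2 * t) := by
    field_simp
  linarith

lemma monotoneOn_Dplus [CompactSpace X] {f : X → ℝ} (hf : Continuous f) (x : X) :
    MonotoneOn (Dplus f x) (Ioi 0) := by
  intro s hs t ht hst
  rcases hst.eq_or_lt with rfl | hst
  · rfl
  have h1 := HL_sub_HL_le hf x (ne_of_gt hs) (ne_of_gt ht)
  have h2 := HL_sub_HL_le hf x (ne_of_gt ht) (ne_of_gt hs)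
  have h3 : 0 < s⁻¹ - t⁻¹ := sub_pos.2 (inv_strictAnti₀ hs hst)
  refine le_of_sq_le_sq ?_ (Dplus_nonneg hf (ne_of_gt ht) x)
  nlinarith

theorem hasDerivAt_HL [CompactSpace X] {f : X → ℝ} (hf : Continuous f) (x : X) {t : ℝ}
    (ht : 0 < t) (hc : ContinuousAt (Dplus f x) t) :
    HasDerivAt (fun τ => HL f τ x) (-(1 / 2) * (Dplus f x t / t) ^ 2) t := by
  set a : ℝ := Dplus f x t ^ 2 / 2 with ha
  have hinv : HasDerivAt (fun s : ℝ => s⁻¹) (-(t ^ 2)⁻¹) t := hasDerivAt_inv ht.ne'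
  have hsmall : (fun s => Dplus f x s ^ 2 / 2 - a) =o[𝓝 t] fun _ => (1 : ℝ) := by
    rw [Asymptotics.isLittleO_one_iff]
    have : ContinuousAt (fun s => Dplus f x s ^ 2 / 2 - a) t := by fun_prop
    simpa [ContinuousAt, ha] using this
  have hprod := hsmall.mul_isBigO hinv.isBigO_sub
  have hdiff : HasDerivAt (fun s => HL f s x - a * s⁻¹) 0 t := by
    rw [hasDerivAt_iff_isLittleO]
    simp only [one_mul] at hprod
    refine Asymptotics.IsBigO.trans_isLittleO (Asymptotics.IsBigO.of_bound 1 ?_) hprod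
    filter_upwards [Ioi_mem_nhds ht] with s hs
    have h1 := HL_sub_HL_le hf x (ne_of_gt hs) ht.ne'
    have h2 := HL_sub_HL_le hf x ht.ne' (ne_of_gt hs)
    rw [← ha] at h1
    rw [one_mul, Real.norm_eq_abs, Real.norm_eq_abs, smul_zero, sub_zero]
    have h3 : HL f s x - a * s⁻¹ - (HL f t x - a * t⁻¹) ≤ 0 := by linarith
    rw [abs_of_nonpos h3]
    exact le_trans (by linarith) (neg_le_abs _)
  have hderiv : -(1 / 2) * (Dplus f x t / t) ^ 2 = 0 + a * -(t ^ 2)⁻¹ := by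
    rw [ha]; field_simp; ring
  rw [hderiv]
  exact (hdiff.add (hinv.const_mul a)).congr_of_eventuallyEq (.of_forall fun s => by simp)

end HopfLax

/-- **Supersolution of the Hamilton–Jacobi equation** (Theorem 3.6): if `(X,d)` is a compact
geodesic space and `f` is Lipschitz, then `|D Q_t f|(x) = D⁺(x,t)/t` for every
`(x,t) ∈ X × (0,∞)`; consequently for every `x`, at all `t ∈ (0,∞)` with at most countably
many exceptions the derivative `(d/dt) Q_t f (x)` exists and
`(d/dt) Q_t f (x) + ½ |D Q_t f|²(x) = 0`. -/
theorem stmt5 {X : Type*} [MetricSpace X] [CompactSpace X] [Nonempty X]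
    (hgeo : IsGeodesicSpace X)
    (f : X → ℝ) (hf : ∃ K : ℝ≥0, LipschitzWith K f) :
    (∀ (x : X) (t : ℝ), 0 < t → locSlope (HL f t) x = Dplus f x t / t) ∧
    (∀ x : X, ∃ E : Set ℝ, E.Countable ∧ ∀ t ∈ Ioi (0 : ℝ), t ∉ E →
      ∃ d : ℝ, HasDerivAt (fun τ : ℝ => HL f τ x) d t ∧
        d + (1 / 2) * (locSlope (HL f t) x) ^ 2 = 0) := by
  obtain ⟨K, hK⟩ := hf
  have hf := hK.continuous
  refine ⟨fun x t ht => locSlope_HL hgeo hf ht x, fun x =>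
    ⟨_, (monotoneOn_Dplus hf x).countable_not_continuousWithinAt, fun t ht htE => ?_⟩⟩
  have hc : ContinuousWithinAt (Dplus f x) (Ioi 0) t := by
    by_contra h
    exact htE ⟨ht, h⟩
  refine ⟨_, hasDerivAt_HL hf x ht (hc.continuousAt (Ioi_mem_nhds ht)), ?_⟩
  rw [locSlope_HL hgeo hf ht x]
  ring
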